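/- Let (X_i)_{i∈ℤ} be a stationary ergodic process over a finite alphabet 𝕏 with entropy rate h. For any ε > 0 and any sequence of sample sizes n(k) ≥ 2^{k(h+ε)}, almost surely liminf_{k→∞} K(k, X_1^{n(k)})/n(k) ≥ h. -/

import Mathlib

open MeasureTheory Filter Real

variable {𝕏 : Type*} [Fintype 𝕏] [Nonempty 𝕏] [DecidableEq 𝕏]
  [MeasurableSpace 𝕏] [MeasurableSingletonClass 𝕏]

/-- The left shift on two-sided sequences: `(shift ω) i = ω (i + 1)`. -/
def shift (ω : ℤ → 𝕏) : ℤ → 𝕏 := fun i => ω (i + 1)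

/-- The block `X_{s+1}^{s+l}` of a sequence `ω`, as a tuple in `𝕏^l`. -/
def blk (s l : ℕ) (ω : ℤ → 𝕏) : Fin l → 𝕏 := fun i => ω ((s : ℤ) + 1 + (i : ℤ))

/-- Shannon entropy (base 2) of a distribution `p` on a finite set:
`H(p) = -∑_{w : p w > 0} p w * log₂ (p w)` (`logb 2 0 = 0`, so zero-mass
points contribute nothing). -/
noncomputable def Hent {A : Type*} [Fintype A] (p : A → ℝ) : ℝ :=
  -∑ w, p w * Real.logb 2 (p w)

/-- Empirical nonoverlapping-block distribution
`p_k(w, x_1^n) = ⌊n/k⌋⁻¹ ∑_{i=1}^{⌊n/k⌋} 1[x_{(i-1)k+1}^{ik} = w]`. -/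
noncomputable def empDist (k n : ℕ) (ω : ℤ → 𝕏) : (Fin k → 𝕏) → ℝ :=
  fun w => (∑ i ∈ Finset.range (n / k), if blk (i * k) k ω = w then (1 : ℝ) else 0) / (n / k : ℕ)

/-- Plug-in estimator `H(k, x_1^n)` of the block entropy. -/
noncomputable def plugIn (k n : ℕ) (ω : ℤ → 𝕏) : ℝ := Hent (empDist k n ω)

/-- True block distribution `p_k(w) = P(X_1^k = w)`. -/
noncomputable def pblock (μ : Measure (ℤ → 𝕏)) (k : ℕ) : (Fin k → 𝕏) → ℝ :=
  fun w => (μ {ω | blk 0 k ω = w}).toReal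

/-- Block entropy `H(k) = H(p_k)`. -/
noncomputable def Hblock (μ : Measure (ℤ → 𝕏)) (k : ℕ) : ℝ := Hent (pblock μ k)

/-- Number `D(k, x_1^n)` of distinct nonoverlapping `k`-blocks in `x_1^n`. -/
noncomputable def Dcount (k n : ℕ) (ω : ℤ → 𝕏) : ℕ :=
  Set.ncard {w : Fin k → 𝕏 | ∃ i < n / k, blk (i * k) k ω = w}

/-- Length bound `K(k, x_1^n)` of the modified `k`-block code:
`K(k,x_1^n) = 2 log₂ k + (n/k)(H(k,x_1^n) + 2) + 3 k log₂|𝕏| (D(k,x_1^n) + 1)`. -/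
noncomputable def Kcode (k n : ℕ) (ω : ℤ → 𝕏) : ℝ :=
  2 * Real.logb 2 k + ((n : ℝ) / k) * (plugIn k n ω + 2)
    + 3 * k * Real.logb 2 (Fintype.card 𝕏) * (Dcount k n ω + 1)

/-- Conditional probability `P(X_1^k = w | ℐ)` given the shift-invariant
σ-algebra `ℐ`, as a function of the sample point. -/
noncomputable def condP (μ : Measure (ℤ → 𝕏)) (k : ℕ) (w : Fin k → 𝕏) : (ℤ → 𝕏) → ℝ :=
  μ[Set.indicator {ω | blk 0 k ω = w} (fun _ => (1 : ℝ)) | MeasurableSpace.invariants shift]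

/-- Conditional block entropy `H(X_1^k | ℐ) = E[-log₂ P(X_1^k = w | ℐ)|_{w = X_1^k}]`. -/
noncomputable def condH (μ : Measure (ℤ → 𝕏)) (k : ℕ) : ℝ :=
  ∫ ω, -Real.logb 2 (condP μ k (blk 0 k ω) ω) ∂μ

/-- `σ(y) = min(2^y, 1)`. -/
noncomputable def sigmaFn (y : ℝ) : ℝ := min ((2 : ℝ) ^ y) 1

/-- Negative part `x⁻ = -x · 1[x < 0]`. -/
noncomputable def nPart (x : ℝ) : ℝ := if x < 0 then -x else 0

set_option linter.unusedSectionVars false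
set_option linter.style.haveILetI false

lemma measurable_blk (s l : ℕ) : Measurable (blk s l : (ℤ → 𝕏) → (Fin l → 𝕏)) := by
  unfold blk
  exact measurable_pi_lambda _ fun i => measurable_pi_apply _

lemma pblock_nonneg (μ : Measure (ℤ → 𝕏)) (k : ℕ) (w : Fin k → 𝕏) : 0 ≤ pblock μ k w :=
  ENNReal.toReal_nonneg

lemma integral_blk (μ : Measure (ℤ → 𝕏)) [IsProbabilityMeasure μ] (N : ℕ)
    (g : (Fin N → 𝕏) → ℝ) :
    ∫ ω, g (blk 0 N ω) ∂μ = ∑ w, pblock μ N w * g w := by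
  rw [← integral_map (φ := blk 0 N) (measurable_blk 0 N).aemeasurable
    (Measurable.of_discrete.aestronglyMeasurable)]
  haveI : IsProbabilityMeasure (μ.map (blk 0 N)) :=
    Measure.isProbabilityMeasure_map (measurable_blk 0 N).aemeasurable
  rw [integral_fintype (Integrable.of_finite)]
  refine Finset.sum_congr rfl fun w _ => ?_
  rw [smul_eq_mul, Measure.real, Measure.map_apply (measurable_blk 0 N) (measurableSet_singleton w)]
  rfl

lemma integrable_blk (μ : Measure (ℤ → 𝕏)) [IsProbabilityMeasure μ] (N : ℕ)
    (g : (Fin N → 𝕏) → ℝ) : Integrable (fun ω => g (blk 0 N ω)) μ := by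
  haveI : IsProbabilityMeasure (μ.map (blk 0 N)) :=
    Measure.isProbabilityMeasure_map (measurable_blk 0 N).aemeasurable
  exact (Integrable.of_finite (μ := μ.map (blk 0 N)) (f := g)).comp_measurable (measurable_blk 0 N)

lemma sum_pblock (μ : Measure (ℤ → 𝕏)) [IsProbabilityMeasure μ] (N : ℕ) :
    ∑ w, pblock μ N w = 1 := by
  have := integral_blk μ N (fun _ => 1)
  simpa using this.symm

lemma pblock_le_one (μ : Measure (ℤ → 𝕏)) [IsProbabilityMeasure μ] (k : ℕ) (w : Fin k → 𝕏) :
    pblock μ k w ≤ 1 := by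
  rw [← sum_pblock μ k]
  exact Finset.single_le_sum (fun w _ => pblock_nonneg μ k w) (Finset.mem_univ w)

lemma gibbs_ineq {A : Type*} [Fintype A] (p q : A → ℝ) (hp : ∀ a, 0 ≤ p a) (hp1 : ∑ a, p a = 1)
    (hq : ∀ a, 0 < q a) (hq1 : ∑ a, q a ≤ 1) :
    Hent p ≤ ∑ a, p a * (-Real.logb 2 (q a)) := by
  have key : ∀ a, p a * (Real.log (q a) - Real.log (p a)) ≤ q a - p a := by
    intro a
    rcases (hp a).eq_or_lt with h | h
    · rw [← h]; simpa using (hq a).le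
    · rw [← Real.log_div (hq a).ne' h.ne']
      have := Real.log_le_sub_one_of_pos (div_pos (hq a) h)
      calc _ ≤ p a * (q a / p a - 1) := mul_le_mul_of_nonneg_left this h.le
        _ = _ := by field_simp
  have hs := Finset.sum_le_sum fun a (_ : a ∈ Finset.univ) => key a
  rw [Finset.sum_sub_distrib, hp1] at hs
  have h2 : 0 < Real.log 2 := Real.log_pos (by norm_num)
  unfold Hent
  rw [← sub_nonneg]
  have : ∑ a, p a * (-Real.logb 2 (q a)) - -∑ w, p w * Real.logb 2 (p w)
      = -(∑ a, p a * (Real.log (q a) - Real.log (p a))) / Real.log 2 := by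
    rw [sub_neg_eq_add, ← Finset.sum_add_distrib, ← Finset.sum_neg_distrib, Finset.sum_div]
    refine Finset.sum_congr rfl fun a _ => ?_
    simp only [Real.logb]; field_simp; ring
  rw [this]
  apply div_nonneg _ h2.le
  linarith

lemma sum_split {α : Type*} [Fintype α] (n r N : ℕ) (hN : n + r = N) (f : (Fin n → α) → ℝ)
    (g : (Fin r → α) → ℝ) :
    ∑ w : Fin N → α, f (fun i => w ⟨i, by omega⟩) * g (fun i => w ⟨n + i, by omega⟩)
      = (∑ u, f u) * ∑ v, g v := by
  subst hN
  rw [Finset.sum_mul_sum, ← Fintype.sum_prod_type']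
  refine (Fintype.sum_equiv (Fin.appendEquiv n r) _ _ ?_).symm
  rintro ⟨u, v⟩
  congr 1
  · congr 1; ext i; exact (Fin.append_left u v i).symm
  · congr 1; ext i; exact (Fin.append_right u v i).symm

/-- Mixture over all parsings of a word into segments weighted by `wt`. -/
noncomputable def parseQ {α : Type*} (wt : (n : ℕ) → (Fin n → α) → ℝ) :
    (N : ℕ) → (Fin N → α) → ℝ
  | 0, _ => 1
  | N + 1, w => ∑ j : Fin (N + 1), wt (N + 1 - j) (fun i => w ⟨i, by omega⟩) *
      parseQ wt j (fun i => w ⟨N + 1 - j + i, by omega⟩)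
termination_by N => N
decreasing_by exact j.2

lemma parseQ_nonneg {α : Type*} (wt : (n : ℕ) → (Fin n → α) → ℝ) (h : ∀ n u, 0 ≤ wt n u) :
    ∀ N w, 0 ≤ parseQ wt N w := by
  intro N
  induction N using Nat.strong_induction_on with
  | _ N ih =>
    intro w
    cases N with
    | zero => simp [parseQ]
    | succ N =>
      rw [parseQ]
      exact Finset.sum_nonneg fun j _ => mul_nonneg (h _ _) (ih _ j.2 _)

lemma parseQ_sum_le {α : Type*} [Fintype α] (wt : (n : ℕ) → (Fin n → α) → ℝ)
    (h : ∀ n u, 0 ≤ wt n u)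
    (h1 : ∀ N, ∑ n ∈ Finset.range N, ∑ u, wt (n + 1) u ≤ 1) :
    ∀ N, ∑ w, parseQ wt N w ≤ 1 := by
  intro N
  induction N using Nat.strong_induction_on with
  | _ N ih =>
    cases N with
    | zero => simp [parseQ]
    | succ N =>
      simp only [parseQ]
      rw [Finset.sum_comm]
      calc _ = ∑ j : Fin (N + 1), (∑ u, wt (N + 1 - j) u) * ∑ v, parseQ wt j v :=
            Finset.sum_congr rfl fun j _ => sum_split (N + 1 - j) j (N + 1) (by omega) _ _
        _ ≤ ∑ j : Fin (N + 1), ∑ u, wt (N + 1 - j) u :=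
            Finset.sum_le_sum fun j _ => mul_le_of_le_one_right
              (Finset.sum_nonneg fun u _ => h _ _) (ih j j.2)
        _ = ∑ j ∈ Finset.range (N + 1), ∑ u, wt (N + 1 - j) u :=
            Fin.sum_univ_eq_sum_range (fun j => ∑ u, wt (N + 1 - j) u) (N + 1)
        _ = ∑ j ∈ Finset.range (N + 1), ∑ u, wt (j + 1) u := by
            rw [← Finset.sum_range_reflect]
            refine Finset.sum_congr rfl fun j hj => ?_
            have hj := Finset.mem_range.1 hj
            have : N + 1 - (N + 1 - 1 - j) = j + 1 := by omega
            rw [this]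
        _ ≤ 1 := h1 _

lemma parseQ_ge {α : Type*} (wt : (n : ℕ) → (Fin n → α) → ℝ) (h : ∀ n u, 0 ≤ wt n u)
    (n r N : ℕ) (hn : 1 ≤ n) (hN : n + r = N) (w : Fin N → α) :
    wt n (fun i => w ⟨i, by omega⟩) * parseQ wt r (fun i => w ⟨n + i, by omega⟩)
      ≤ parseQ wt N w := by
  obtain ⟨N, rfl⟩ : ∃ N', N = N' + 1 := ⟨N - 1, by omega⟩
  obtain rfl : n = N + 1 - r := by omega
  rw [parseQ]
  exact Finset.single_le_sum (f := fun j : Fin (N + 1) =>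
    wt (N + 1 - j) (fun i => w ⟨i, by omega⟩) *
      parseQ wt j (fun i => w ⟨N + 1 - j + i, by omega⟩))
    (fun j _ => mul_nonneg (h _ _) (parseQ_nonneg wt h _ _))
    (Finset.mem_univ (⟨r, by omega⟩ : Fin (N + 1)))

lemma shift_iterate (n : ℕ) (ω : ℤ → 𝕏) : shift^[n] ω = fun i => ω (i + n) := by
  induction n generalizing ω with
  | zero => simp
  | succ n ih =>
    rw [Function.iterate_succ_apply, ih]
    ext i; simp only [shift]; congr 1; push_cast; ring

lemma blk_suffix (n r N : ℕ) (hN : n + r = N) (ω : ℤ → 𝕏) :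
    (fun i : Fin r => blk 0 N ω ⟨n + i, by omega⟩) = blk 0 r (shift^[n] ω) := by
  rw [shift_iterate]
  ext i; simp only [blk]; congr 1; push_cast; ring

lemma blk_prefix (n N : ℕ) (hN : n ≤ N) (ω : ℤ → 𝕏) :
    (fun i : Fin n => blk 0 N ω ⟨i, by omega⟩) = blk 0 n ω := rfl

lemma path_bound (wt : (n : ℕ) → (Fin n → 𝕏) → ℝ) (hw : ∀ n u, 0 ≤ wt n u)
    (C c : ℝ) (hC : 0 ≤ C) (hc : 0 ≤ c) (L : ℕ) (h1 : ∀ u, (2 : ℝ) ^ (-C) ≤ wt 1 u)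
    (bad : Set (ℤ → 𝕏))
    (hgood : ∀ ω, ω ∉ bad → ∃ n, 1 ≤ n ∧ n ≤ L ∧ (2 : ℝ) ^ (-(c * n)) ≤ wt n (blk 0 n ω)) :
    ∀ N ω, (2 : ℝ) ^ (-(c * N + C * (∑ i ∈ Finset.range N, bad.indicator (fun _ => (1 : ℝ)) (shift^[i] ω))
      + C * (min N L : ℕ))) ≤ parseQ wt N (blk 0 N ω) := by
  intro N
  induction N using Nat.strong_induction_on with
  | _ N ih =>
    intro ω
    have ind0 : ∀ x, 0 ≤ bad.indicator (fun _ => (1 : ℝ)) x := fun x =>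
      Set.indicator_nonneg (fun _ _ => zero_le_one) x
    -- general step
    have step : ∀ (n r : ℕ) (a : ℝ), 1 ≤ n → n + r = N → (2 : ℝ) ^ (-a) ≤ wt n (blk 0 n ω) →
        a + (c * r + C * (∑ i ∈ Finset.range r, bad.indicator (fun _ => (1 : ℝ)) (shift^[i] (shift^[n] ω)))
          + C * (min r L : ℕ)) ≤ c * N + C * (∑ i ∈ Finset.range N, bad.indicator (fun _ => (1 : ℝ)) (shift^[i] ω))
      + C * (min N L : ℕ) →
        (2 : ℝ) ^ (-(c * N + C * (∑ i ∈ Finset.range N, bad.indicator (fun _ => (1 : ℝ)) (shift^[i] ω))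
      + C * (min N L : ℕ))) ≤ parseQ wt N (blk 0 N ω) := by
      intro n r a hn hr ha hle
      refine le_trans ?_ (parseQ_ge wt hw n r N hn hr _)
      rw [blk_suffix n r N hr, blk_prefix n N (by omega)]
      refine le_trans ?_ (mul_le_mul ha (ih r (by omega) _) (by positivity) (hw _ _))
      rw [← Real.rpow_add (by norm_num)]
      apply Real.rpow_le_rpow_of_exponent_le (by norm_num)
      linarith
    have sumsplit : ∀ n r : ℕ, n + r = N →
        ∑ i ∈ Finset.range N, bad.indicator (fun _ => (1 : ℝ)) (shift^[i] ω) =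
        ∑ i ∈ Finset.range n, bad.indicator (fun _ => (1 : ℝ)) (shift^[i] ω) +
        ∑ i ∈ Finset.range r, bad.indicator (fun _ => (1 : ℝ)) (shift^[i] (shift^[n] ω)) := by
      intro n r hr
      rw [← hr, Finset.sum_range_add]
      congr 1
      refine Finset.sum_congr rfl fun i _ => ?_
      rw [← Function.iterate_add_apply, add_comm]
    rcases Nat.eq_zero_or_pos N with rfl | hN
    · simp [parseQ]
    by_cases hL : N ≤ L
    · refine step 1 (N - 1) C le_rfl (by omega) (h1 _) ?_
      rw [sumsplit 1 (N - 1) (by omega)]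
      have e1 : min N L = N := by omega
      have e2 : min (N - 1) L = N - 1 := by omega
      rw [e1, e2]
      have e3 : (N : ℝ) = ((N - 1 : ℕ) : ℝ) + 1 := by
        rw [Nat.cast_sub hN]; simp
      have := ind0 ω
      rw [e3]
      simp only [Finset.sum_range_one, Function.iterate_zero, id]
      nlinarith [mul_nonneg hC this]
    push Not at hL
    by_cases hb : ω ∈ bad
    · refine step 1 (N - 1) C le_rfl (by omega) (h1 _) ?_
      rw [sumsplit 1 (N - 1) (by omega)]
      have e1 : min N L = L := by omega
      have e2 : min (N - 1) L = L := by omega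
      rw [e1, e2]
      have e3 : (N : ℝ) = ((N - 1 : ℕ) : ℝ) + 1 := by
        rw [Nat.cast_sub hN]; simp
      rw [e3]
      simp only [Finset.sum_range_one, Function.iterate_zero, id, Set.indicator_of_mem hb]
      nlinarith
    · obtain ⟨n, hn1, hnL, hn⟩ := hgood ω hb
      refine step n (N - n) (c * n) hn1 (by omega) hn ?_
      rw [sumsplit n (N - n) (by omega)]
      have e1 : ((min (N - n) L : ℕ) : ℝ) ≤ (min N L : ℕ) := by
        exact_mod_cast (by omega)
      have e3 : (N : ℝ) = n + ((N - n : ℕ) : ℝ) := by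
        rw [Nat.cast_sub (by omega)]; simp
      have e4 : 0 ≤ ∑ i ∈ Finset.range n, bad.indicator (fun _ => (1 : ℝ)) (shift^[i] ω) :=
        Finset.sum_nonneg fun i _ => ind0 _
      have e5 := mul_nonneg hC e4
      have e6 := mul_le_mul_of_nonneg_left e1 hC
      rw [mul_add C]
      have e7 : c * (N : ℝ) = c * n + c * ((N - n : ℕ) : ℝ) := by rw [← mul_add, ← e3]
      linarith

/-- Entropy bound by parsing. -/
lemma entropy_bound (μ : Measure (ℤ → 𝕏)) [IsProbabilityMeasure μ]
    (hmp : MeasurePreserving shift μ μ)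
    (wt : (n : ℕ) → (Fin n → 𝕏) → ℝ) (hw : ∀ n u, 0 ≤ wt n u)
    (hw1 : ∀ N, ∑ n ∈ Finset.range N, ∑ u, wt (n + 1) u ≤ 1)
    (C c : ℝ) (hC : 0 ≤ C) (hc : 0 ≤ c) (L : ℕ) (h1 : ∀ u, (2 : ℝ) ^ (-C) ≤ wt 1 u)
    (bad : Set (ℤ → 𝕏)) (hbm : MeasurableSet bad)
    (hgood : ∀ ω, ω ∉ bad → ∃ n, 1 ≤ n ∧ n ≤ L ∧ (2 : ℝ) ^ (-(c * n)) ≤ wt n (blk 0 n ω)) (N : ℕ) :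
    Hblock μ N ≤ c * N + C * (N * μ.real bad) + C * L := by
  have hQpos : ∀ w, 0 < parseQ wt N w := by
    intro w
    have hw0 : ∃ ω : ℤ → 𝕏, blk 0 N ω = w := by
      refine ⟨fun i => if hi : (i - 1).toNat < N then w ⟨(i - 1).toNat, hi⟩ else Classical.arbitrary 𝕏, ?_⟩
      ext i
      simp [blk]
    obtain ⟨ω, rfl⟩ := hw0
    exact lt_of_lt_of_le (by positivity) (path_bound wt hw C c hC hc L h1 bad hgood N ω)
  have hg := gibbs_ineq (pblock μ N) (parseQ wt N) (pblock_nonneg μ N) (sum_pblock μ N) hQpos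
    (parseQ_sum_le wt hw hw1 N)
  refine hg.trans ?_
  rw [← integral_blk μ N (fun w => -Real.logb 2 (parseQ wt N w))]
  have hInt : ∀ i, Integrable (fun ω => bad.indicator (fun _ => (1 : ℝ)) (shift^[i] ω)) μ := fun i =>
    ((hmp.iterate i).integrable_comp
      (((integrable_const (1:ℝ)).indicator hbm).aestronglyMeasurable)).2
      ((integrable_const (1:ℝ)).indicator hbm)
  have hintv : ∀ i, ∫ ω, bad.indicator (fun _ => (1 : ℝ)) (shift^[i] ω) ∂μ = μ.real bad := by
    intro i
    have h := integral_map (μ := μ) (φ := shift^[i]) (hmp.iterate i).measurable.aemeasurable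
      (f := bad.indicator (fun _ => (1 : ℝ)))
      ((measurable_const.indicator hbm).aestronglyMeasurable)
    rw [← h, (hmp.iterate i).map_eq, integral_indicator hbm]
    simp [Measure.real]
  have hsum := integrable_finsetSum (Finset.range N) fun i _ => hInt i
  calc _ ≤ ∫ ω, (c * N + C * (∑ i ∈ Finset.range N, bad.indicator (fun _ => (1 : ℝ)) (shift^[i] ω))
      + C * L) ∂μ := by
        refine integral_mono (integrable_blk μ N (fun w => -Real.logb 2 (parseQ wt N w))) ?_ ?_
        · exact ((integrable_const _).add (hsum.const_mul C)).add (integrable_const _)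
        · intro ω
          have := path_bound wt hw C c hC hc L h1 bad hgood N ω
          have h2 := Real.logb_le_logb_of_le (b := 2) (by norm_num) (by positivity) this
          rw [Real.logb_rpow (by norm_num) (by norm_num)] at h2
          have e1 : ((min N L : ℕ) : ℝ) ≤ L := by exact_mod_cast (min_le_right N L)
          have e6 := mul_le_mul_of_nonneg_left e1 hC
          simp only
          linarith
    _ = _ := by
        have hI : Integrable (fun ω => c * N + C * (∑ i ∈ Finset.range N,
            bad.indicator (fun _ => (1 : ℝ)) (shift^[i] ω))) μ :=
          (integrable_const _).add (hsum.const_mul C)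
        rw [integral_add hI (integrable_const _), integral_add (integrable_const _) (hsum.const_mul C),
          integral_const_mul C (fun a => ∑ i ∈ Finset.range N, bad.indicator (fun _ => (1 : ℝ)) (shift^[i] a)),
          integral_finsetSum _ fun i _ => hInt i]
        simp [hintv]

lemma measurable_pblk (μ : Measure (ℤ → 𝕏)) (n : ℕ) :
    Measurable (fun ω : ℤ → 𝕏 => pblock μ n (blk 0 n ω)) :=
  (Measurable.of_discrete (f := pblock μ n)).comp (measurable_blk 0 n)

lemma pblock_succ_le (μ : Measure (ℤ → 𝕏)) [IsProbabilityMeasure μ]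
    (hmp : MeasurePreserving shift μ μ) (n : ℕ) (ω : ℤ → 𝕏) :
    pblock μ (n + 1) (blk 0 (n + 1) ω) ≤ pblock μ n (blk 0 n (shift ω)) := by
  unfold pblock
  apply ENNReal.toReal_mono (measure_ne_top _ _)
  have hm : MeasurableSet {ω' : ℤ → 𝕏 | blk 0 n ω' = blk 0 n (shift ω)} :=
    measurable_blk 0 n (measurableSet_singleton _)
  rw [← hmp.measure_preimage hm.nullMeasurableSet]
  apply measure_mono
  intro ω' hω'
  simp only [Set.mem_preimage, Set.mem_ofPred_eq] at hω' ⊢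
  ext i
  have := congrFun hω' i.succ
  simp only [blk, shift] at this ⊢
  convert this using 2 <;> simp <;> ring

/-- If almost surely infinitely many prefixes have probability at least `2^{-cn}`, then `h ≤ c`. -/
lemma not_ae_frequently (μ : Measure (ℤ → 𝕏)) [IsProbabilityMeasure μ]
    (hmp : MeasurePreserving shift μ μ) (h : ℝ)
    (hrate : Tendsto (fun k => Hblock μ k / k) atTop (nhds h)) (c : ℝ)
    (hA : ∀ᵐ ω ∂μ, ∃ᶠ n : ℕ in atTop, (2 : ℝ) ^ (-(c * n)) ≤ pblock μ n (blk 0 n ω)) :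
    h ≤ c := by
  by_contra! hlt
  have hc : 0 ≤ c := by
    obtain ⟨ω, hω⟩ := hA.exists
    obtain ⟨n, hn, hn2⟩ := (Filter.frequently_atTop.1 hω) 1
    have h1 := hn2.trans (pblock_le_one μ n _)
    by_contra! hc
    have : (1 : ℝ) < (2 : ℝ) ^ (-(c * n)) := by
      apply Real.one_lt_rpow (by norm_num)
      have : (0 : ℝ) < n := by exact_mod_cast hn
      nlinarith
    linarith
  obtain ⟨δ, hδ, hδh⟩ : ∃ δ : ℝ, 0 < δ ∧ c + 2 * δ < h := ⟨(h - c) / 3, by linarith, by linarith⟩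
  set r : ℝ := (2 : ℝ) ^ (-δ) with hr
  have hr0 : 0 < r := by positivity
  have hr1 : r < 1 := Real.rpow_lt_one_of_one_lt_of_neg (by norm_num) (by linarith)
  set κ : ℝ := (1 - r) / 2 with hκ
  have hκ0 : 0 < κ := by rw [hκ]; linarith
  obtain ⟨M, hM⟩ : ∃ M, ∀ n ≥ M, r ^ n ≤ κ := by
    have := (tendsto_pow_atTop_nhds_zero_of_lt_one hr0.le hr1).eventually (ge_mem_nhds hκ0)
    exact Filter.eventually_atTop.1 this
  have hX : (0 : ℝ) < Fintype.card 𝕏 := by exact_mod_cast Fintype.card_pos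
  set wt : (n : ℕ) → (Fin n → 𝕏) → ℝ := fun n u =>
    (if n = 1 then 1 / (2 * (Fintype.card 𝕏 : ℝ)) else 0) + κ * r ^ n * pblock μ n u with hwt
  have hw : ∀ n u, 0 ≤ wt n u := by
    intro n u
    have := pblock_nonneg μ n u
    simp only [hwt]
    split_ifs <;> positivity
  have hw1 : ∀ N, ∑ n ∈ Finset.range N, ∑ u, wt (n + 1) u ≤ 1 := by
    intro N
    have e : ∀ n, ∑ u, wt (n + 1) u = (if n = 0 then 1 / 2 else 0) + κ * r * r ^ n := by
      intro n
      simp only [hwt]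
      rw [Finset.sum_add_distrib, ← Finset.mul_sum, sum_pblock]
      congr 1
      · rcases Nat.eq_zero_or_pos n with rfl | hn
        · simp
        · simp [hn.ne']
      · ring
    simp only [e]
    rw [Finset.sum_add_distrib, ← Finset.mul_sum]
    have h1 : ∑ n ∈ Finset.range N, (if n = 0 then (1 / 2 : ℝ) else 0) ≤ 1 / 2 := by
      rw [Finset.sum_ite_eq']
      split_ifs <;> norm_num
    have h2 : (1 - r) * ∑ n ∈ Finset.range N, r ^ n ≤ 1 := by
      rw [mul_neg_geom_sum]; linarith [pow_pos hr0 N]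
    have h3 : 0 ≤ ∑ n ∈ Finset.range N, r ^ n := Finset.sum_nonneg fun n _ => by positivity
    have h4 : κ * r * ∑ n ∈ Finset.range N, r ^ n ≤ 1 / 2 := by
      calc _ = r * ((1 - r) * ∑ n ∈ Finset.range N, r ^ n) / 2 := by rw [hκ]; ring
        _ ≤ 1 * 1 / 2 := by
          gcongr
        _ = 1 / 2 := by norm_num
    linarith
  set C : ℝ := Real.logb 2 (2 * (Fintype.card 𝕏 : ℝ)) with hCdef
  have hC : 0 ≤ C := by
    apply Real.logb_nonneg (by norm_num)
    have : (1 : ℝ) ≤ Fintype.card 𝕏 := by exact_mod_cast Fintype.card_pos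
    linarith
  have h1 : ∀ u, (2 : ℝ) ^ (-C) ≤ wt 1 u := by
    intro u
    have := pblock_nonneg μ 1 u
    rw [Real.rpow_neg (by norm_num), hCdef, Real.rpow_logb (by norm_num) (by norm_num) (by positivity)]
    simp only [hwt, if_true]
    rw [one_div]
    have : 0 ≤ κ * r ^ 1 * pblock μ 1 u := by positivity
    linarith
  let bad : ℕ → Set (ℤ → 𝕏) := fun L =>
    {ω | ∀ n, M + 1 ≤ n → n ≤ L → pblock μ n (blk 0 n ω) < (2 : ℝ) ^ (-(c * n))}
  have hbm : ∀ L, MeasurableSet (bad L) := by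
    intro L
    refine measurableSet_setOfPred.2 (Measurable.forall fun n => Measurable.forall fun _ =>
      Measurable.forall fun _ => measurableSet_setOfPred.1 ?_)
    exact measurableSet_lt (measurable_pblk μ n) measurable_const
  have hgood : ∀ L, ∀ ω, ω ∉ bad L → ∃ n, 1 ≤ n ∧ n ≤ L ∧
      (2 : ℝ) ^ (-((c + 2 * δ) * n)) ≤ wt n (blk 0 n ω) := by
    intro L ω hω
    simp only [bad, Set.mem_ofPred_eq] at hω
    push Not at hω
    obtain ⟨n, hn1, hn2, hn3⟩ := hω
    refine ⟨n, by omega, hn2, ?_⟩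
    have e : (2 : ℝ) ^ (-((c + 2 * δ) * n)) = r ^ n * r ^ n * (2 : ℝ) ^ (-(c * n)) := by
      rw [hr, ← Real.rpow_natCast, ← Real.rpow_mul (by norm_num), ← Real.rpow_add (by norm_num),
        ← Real.rpow_add (by norm_num)]
      congr 1; ring
    rw [e]
    have h5 : κ * r ^ n * pblock μ n (blk 0 n ω) ≤ wt n (blk 0 n ω) := by
      simp only [hwt]
      have : (0 : ℝ) ≤ if n = 1 then 1 / (2 * (Fintype.card 𝕏 : ℝ)) else 0 := by
        split_ifs <;> positivity
      linarith
    refine le_trans ?_ h5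
    have := hM n (by omega)
    gcongr
  have hb : ∀ L, h ≤ (c + 2 * δ) + C * μ.real (bad L) := by
    intro L
    have hlim : Tendsto (fun N : ℕ => (c + 2 * δ) + C * μ.real (bad L) + C * L / N) atTop
        (nhds ((c + 2 * δ) + C * μ.real (bad L) + 0)) :=
      tendsto_const_nhds.add (tendsto_const_div_atTop_nhds_zero_nat _)
    rw [add_zero] at hlim
    refine le_of_tendsto_of_tendsto hrate hlim ?_
    filter_upwards [Filter.eventually_ge_atTop 1] with N hN
    have hN' : (0 : ℝ) < N := by exact_mod_cast hN
    have := entropy_bound μ hmp wt hw hw1 C (c + 2 * δ) hC (by linarith) L h1 (bad L) (hbm L) (hgood L) N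
    rw [div_le_iff₀ hN']
    refine this.trans (le_of_eq ?_)
    field_simp
  have hlim : Tendsto (fun L => μ.real (bad L)) atTop (nhds 0) := by
    have hanti : Antitone bad := fun a b hab ω hω n h1 h2 => hω n h1 (h2.trans hab)
    have := tendsto_measure_iInter_atTop (μ := μ) (fun L => (hbm L).nullMeasurableSet) hanti
      ⟨0, measure_ne_top _ _⟩
    have hz : μ (⋂ L, bad L) = 0 := by
      rw [measure_eq_zero_iff_ae_notMem]
      filter_upwards [hA] with ω hω hmem
      obtain ⟨n, hn, hn2⟩ := (Filter.frequently_atTop.1 hω) (M + 1)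
      have := (Set.mem_iInter.1 hmem n) n hn le_rfl
      linarith
    rw [hz] at this
    have h2 := (ENNReal.tendsto_toReal ENNReal.zero_ne_top).comp this
    simpa [Function.comp_def, Measure.real] using h2
  have hfin : h ≤ (c + 2 * δ) + C * 0 :=
    ge_of_tendsto' (tendsto_const_nhds.add (hlim.const_mul C)) hb
  linarith

/-- The lower half of the Shannon-McMillan-Breiman theorem. -/
lemma smb_lower (μ : Measure (ℤ → 𝕏)) [IsProbabilityMeasure μ]
    (herg : Ergodic shift μ) (h : ℝ)
    (hrate : Tendsto (fun k => Hblock μ k / k) atTop (nhds h)) (c : ℝ) (hc : c < h) :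
    ∀ᵐ ω ∂μ, ∀ᶠ n : ℕ in atTop, pblock μ n (blk 0 n ω) < (2 : ℝ) ^ (-(c * n)) := by
  have hmp : MeasurePreserving shift μ μ := herg.toMeasurePreserving
  set A : Set (ℤ → 𝕏) := {ω | ∃ C : ℕ, ∀ a : ℕ, ∃ n : ℕ, a ≤ n ∧
    (2 : ℝ) ^ (-(c * n)) ≤ C * pblock μ n (blk 0 n ω)} with hAdef
  have hAm : MeasurableSet A := by
    refine measurableSet_setOfPred.2 (Measurable.exists fun C => Measurable.forall fun a =>
      Measurable.exists fun n => Measurable.and measurable_const (measurableSet_setOfPred.1 ?_))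
    exact measurableSet_le measurable_const ((measurable_pblk μ n).const_mul _)
  have hsub : A ⊆ shift ⁻¹' A := by
    rintro ω ⟨C, hC⟩
    obtain ⟨k, hk⟩ := exists_nat_ge ((2 : ℝ) ^ c)
    refine ⟨k * C, fun a => ?_⟩
    obtain ⟨n, hn, hn2⟩ := hC (a + 1)
    obtain ⟨n, rfl⟩ : ∃ n', n = n' + 1 := ⟨n - 1, by omega⟩
    refine ⟨n, by omega, ?_⟩
    have e : (2 : ℝ) ^ (-(c * n)) = (2 : ℝ) ^ c * (2 : ℝ) ^ (-(c * (n + 1 : ℕ))) := by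
      rw [← Real.rpow_add (by norm_num)]; congr 1; push_cast; ring
    rw [e, Nat.cast_mul, mul_assoc]
    refine mul_le_mul hk (hn2.trans ?_) (by positivity) (by positivity)
    gcongr
    exact pblock_succ_le μ hmp n ω
  rcases herg.ae_empty_or_univ_of_ae_le_preimage hAm.nullMeasurableSet
    (Filter.Eventually.of_forall hsub) with h0 | h1
  · have : ∀ᵐ ω ∂μ, ω ∉ A := measure_eq_zero_iff_ae_notMem.1 (by rw [measure_congr h0]; simp)
    filter_upwards [this] with ω hω
    by_contra hcon
    rw [Filter.not_eventually] at hcon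
    refine hω ⟨1, fun a => ?_⟩
    obtain ⟨n, hn, hn2⟩ := (Filter.frequently_atTop.1 hcon) a
    exact ⟨n, hn, by simpa using hn2⟩
  · exfalso
    have hae : ∀ᵐ ω ∂μ, ω ∈ A := by
      filter_upwards [h1] with ω hω
      exact (iff_of_eq hω).2 trivial
    obtain ⟨c', hcc, hch⟩ := exists_between hc
    refine absurd (not_ae_frequently μ hmp h hrate c' ?_) (not_le.2 hch)
    filter_upwards [hae] with ω hω
    obtain ⟨C, hC⟩ := hω
    rw [Filter.frequently_atTop]
    intro a
    have hlim : Tendsto (fun n : ℕ => ((2 : ℝ) ^ (c' - c)) ^ n) atTop atTop :=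
      tendsto_pow_atTop_atTop_of_one_lt (Real.one_lt_rpow (by norm_num) (by linarith))
    obtain ⟨b, hb⟩ := Filter.eventually_atTop.1 (hlim.eventually_ge_atTop (C : ℝ))
    obtain ⟨n, hn, hn2⟩ := hC (max a b)
    refine ⟨n, (le_max_left _ _).trans hn, ?_⟩
    have hbn := hb n ((le_max_right _ _).trans hn)
    have hp := pblock_nonneg μ n (blk 0 n ω)
    have e : (2 : ℝ) ^ (-(c * n)) = ((2 : ℝ) ^ (c' - c)) ^ n * (2 : ℝ) ^ (-(c' * n)) := by
      rw [← Real.rpow_natCast, ← Real.rpow_mul (by norm_num), ← Real.rpow_add (by norm_num)]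
      congr 1; ring
    rw [e] at hn2
    have h3 := hn2.trans (mul_le_mul_of_nonneg_right hbn hp)
    exact le_of_mul_le_mul_left h3 (by positivity)

/-- Number of occurrences of `w` in the sequence `b`. -/
def cntOf {W : Type*} [DecidableEq W] {m : ℕ} (b : Fin m → W) (w : W) : ℕ :=
  (Finset.univ.filter (fun i => b i = w)).card

lemma cntOf_le {W : Type*} [DecidableEq W] {m : ℕ} (b : Fin m → W) (w : W) : cntOf b w ≤ m := by
  unfold cntOf
  exact (Finset.card_filter_le _ _).trans (by simp)

lemma sum_cntOf {W : Type*} [Fintype W] [DecidableEq W] {m : ℕ} (b : Fin m → W) :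
    ∑ w, cntOf b w = m := by
  unfold cntOf
  rw [← Finset.card_eq_sum_card_fiberwise (fun _ _ => Finset.mem_coe.2 (Finset.mem_univ _))]
  simp

/-- Weight of a type. -/
noncomputable def typeWt (W : Type*) [Fintype W] (m : ℕ) (c : W → ℕ) : ℝ :=
  (∏ w, ((c w : ℝ) / m) ^ (c w)) *
    ∏ w, ((1 / 4 : ℝ) ^ (c w) * (if c w = 0 then 1 else (Fintype.card W : ℝ)⁻¹))

lemma typeWt_nonneg (W : Type*) [Fintype W] (m : ℕ) (c : W → ℕ) : 0 ≤ typeWt W m c := by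
  unfold typeWt
  refine mul_nonneg (Finset.prod_nonneg fun w _ => by positivity) (Finset.prod_nonneg fun w _ => ?_)
  split_ifs <;> positivity

lemma kraft_blocks {W : Type*} [Fintype W] [DecidableEq W] [Nonempty W] (m : ℕ) :
    ∑ b : Fin m → W, typeWt W m (cntOf b) ≤ 3 := by
  have hW : (0 : ℝ) < Fintype.card W := by exact_mod_cast Fintype.card_pos
  set g : ℕ → ℝ := fun j => (1 / 4 : ℝ) ^ j * (if j = 0 then 1 else (Fintype.card W : ℝ)⁻¹) with hg
  have hg0 : ∀ j, 0 ≤ g j := by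
    intro j; simp only [hg]; split_ifs <;> positivity
  have hmaps : ∀ b ∈ (Finset.univ : Finset (Fin m → W)), cntOf b ∈
      Fintype.piFinset (fun _ : W => Finset.range (m + 1)) := by
    intro b _
    rw [Fintype.mem_piFinset]
    intro w
    exact Finset.mem_range.2 (Nat.lt_succ_of_le (cntOf_le b w))
  rw [← Finset.sum_fiberwise_of_maps_to hmaps]
  have h1 : ∀ c ∈ Fintype.piFinset (fun _ : W => Finset.range (m + 1)),
      ∑ b : Fin m → W with cntOf b = c, typeWt W m (cntOf b) ≤ ∏ w, g (c w) := by
    intro c _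
    have hgc : 0 ≤ ∏ w, g (c w) := Finset.prod_nonneg fun w _ => hg0 _
    by_cases hne : ∃ b : Fin m → W, cntOf b = c
    · obtain ⟨b0, hb0⟩ := hne
      have hsum : ∑ w, c w = m := by rw [← hb0]; exact sum_cntOf b0
      have e : ∀ b ∈ Finset.univ.filter (fun b : Fin m → W => cntOf b = c),
          typeWt W m (cntOf b) = (∏ i, ((c (b i) : ℝ) / m)) * ∏ w, g (c w) := by
        intro b hb
        have hb : cntOf b = c := by simpa using hb
        rw [hb]
        unfold typeWt
        congr 1
        rw [← Finset.prod_fiberwise (s := Finset.univ) (g := b)]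
        refine Finset.prod_congr rfl fun w _ => ?_
        rw [Finset.prod_congr rfl (g := fun _ => (c w : ℝ) / m)]
        · rw [Finset.prod_const, ← hb]; rfl
        · intro i hi
          rw [(Finset.mem_filter.1 hi).2]
      rw [Finset.sum_congr rfl e, ← Finset.sum_mul]
      refine mul_le_of_le_one_left hgc ?_
      calc _ ≤ ∑ b : Fin m → W, ∏ i, ((c (b i) : ℝ) / m) :=
            Finset.sum_le_sum_of_subset_of_nonneg (Finset.filter_subset _ _)
              fun b _ _ => Finset.prod_nonneg fun i _ => by positivity
        _ = (∑ w, (c w : ℝ) / m) ^ m := (Fintype.sum_pow (fun w => (c w : ℝ) / m) m).symm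
        _ ≤ 1 := by
            rw [← Finset.sum_div, ← Nat.cast_sum, hsum]
            exact pow_le_one₀ (by positivity) (div_self_le_one _)
    · rw [Finset.filter_eq_empty_iff.2]
      · simpa using hgc
      · intro b _ hb; exact hne ⟨b, hb⟩
  refine (Finset.sum_le_sum h1).trans ?_
  rw [← Finset.prod_univ_sum (fun _ : W => Finset.range (m + 1)) (fun _ j => g j)]
  rw [Finset.prod_const, Finset.card_univ]
  have h2 : ∑ j ∈ Finset.range (m + 1), g j ≤ 1 + (Fintype.card W : ℝ)⁻¹ := by
    rw [Finset.sum_range_succ']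
    have e0 : g 0 = 1 := by simp [hg]
    have e1 : ∀ j, g (j + 1) = (Fintype.card W : ℝ)⁻¹ / 4 * (1 / 4 : ℝ) ^ j := by
      intro j; simp only [hg]; rw [if_neg (by omega)]; ring
    simp only [e1]
    rw [e0, ← Finset.mul_sum]
    have h3 : (1 - 1 / 4 : ℝ) * ∑ j ∈ Finset.range m, (1 / 4 : ℝ) ^ j ≤ 1 := by
      rw [mul_neg_geom_sum]
      have : (0 : ℝ) < (1 / 4) ^ m := by positivity
      linarith
    have h4 : ∑ j ∈ Finset.range m, (1 / 4 : ℝ) ^ j ≤ 4 := by linarith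
    have h5 : (Fintype.card W : ℝ)⁻¹ / 4 * ∑ j ∈ Finset.range m, (1 / 4 : ℝ) ^ j
        ≤ (Fintype.card W : ℝ)⁻¹ / 4 * 4 := by gcongr
    linarith
  calc _ ≤ (1 + (Fintype.card W : ℝ)⁻¹) ^ Fintype.card W := by
        gcongr
    _ ≤ (Real.exp ((Fintype.card W : ℝ)⁻¹)) ^ Fintype.card W := by
        gcongr
        rw [add_comm]; exact Real.add_one_le_exp _
    _ = Real.exp 1 := by
        rw [← Real.exp_nat_mul, mul_inv_cancel₀ hW.ne']
    _ ≤ 3 := by linarith [Real.exp_one_lt_d9]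

/-- The sequence of nonoverlapping blocks. -/
def blks (k m : ℕ) (ω : ℤ → 𝕏) : Fin m → (Fin k → 𝕏) := fun i => blk (i * k) k ω

lemma empDist_eq (k n : ℕ) (ω : ℤ → 𝕏) (w : Fin k → 𝕏) :
    empDist k n ω w = (cntOf (blks k (n / k) ω) w : ℝ) / (n / k : ℕ) := by
  unfold empDist cntOf blks
  rw [Finset.sum_range (f := fun i => if blk (i * k) k ω = w then (1 : ℝ) else 0),
    Finset.sum_boole]

lemma Dcount_eq (k n : ℕ) (ω : ℤ → 𝕏) :
    Dcount k n ω = (Finset.univ.filter (fun w => ¬ cntOf (blks k (n / k) ω) w = 0)).card := by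
  unfold Dcount
  rw [← Set.ncard_coe_finset]
  congr 1
  ext w
  simp only [cntOf, blks, Finset.coe_filter, Finset.mem_univ, true_and, Set.mem_ofPred_eq,
    Finset.card_eq_zero]
  push Not
  constructor
  · rintro ⟨i, hi, h⟩
    exact ⟨⟨i, hi⟩, Finset.mem_filter.2 ⟨Finset.mem_univ _, h⟩⟩
  · rintro ⟨i, h⟩
    have h : blk (i * k) k ω = w := (Finset.mem_filter.1 h).2
    exact ⟨i, i.2, h⟩

lemma Dcount_le (k n : ℕ) (ω : ℤ → 𝕏) : Dcount k n ω ≤ n / k := by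
  rw [Dcount_eq]
  calc _ ≤ ∑ w, cntOf (blks k (n / k) ω) w := by
        rw [Finset.card_filter]
        refine Finset.sum_le_sum fun w _ => ?_
        split_ifs <;> omega
    _ = n / k := sum_cntOf _

lemma empDist_nonneg (k n : ℕ) (ω : ℤ → 𝕏) (w : Fin k → 𝕏) : 0 ≤ empDist k n ω w := by
  rw [empDist_eq]; positivity

lemma empDist_le_one (k n : ℕ) (ω : ℤ → 𝕏) (w : Fin k → 𝕏) : empDist k n ω w ≤ 1 := by
  rw [empDist_eq]
  exact div_le_one_of_le₀ (by exact_mod_cast cntOf_le _ w) (by positivity)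

lemma plugIn_nonneg (k n : ℕ) (ω : ℤ → 𝕏) : 0 ≤ plugIn k n ω := by
  unfold plugIn Hent
  rw [neg_nonneg]
  refine Finset.sum_nonpos fun w _ => ?_
  exact mul_nonpos_of_nonneg_of_nonpos (empDist_nonneg k n ω w)
    (Real.logb_nonpos (by norm_num) (empDist_nonneg k n ω w) (empDist_le_one k n ω w))

lemma plugIn_le (k n : ℕ) (ω : ℤ → 𝕏) (hk : 1 ≤ n / k) :
    plugIn k n ω ≤ k * Real.logb 2 (Fintype.card 𝕏) := by
  have hX : (0 : ℝ) < Fintype.card 𝕏 := by exact_mod_cast Fintype.card_pos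
  have hm : (0 : ℝ) < (n / k : ℕ) := by exact_mod_cast hk
  have hs : ∑ w, empDist k n ω w = 1 := by
    simp only [empDist_eq]
    rw [← Finset.sum_div, ← Nat.cast_sum, sum_cntOf, div_self hm.ne']
  have h1 := gibbs_ineq (empDist k n ω) (fun _ => ((Fintype.card 𝕏 : ℝ) ^ k)⁻¹)
    (empDist_nonneg k n ω) hs (fun _ => by positivity) (by
      simp)
  refine h1.trans (le_of_eq ?_)
  rw [← Finset.sum_mul, hs, one_mul, Real.logb_inv, neg_neg, Real.logb_pow]

lemma two_rpow_neg_Kcode_le (k n : ℕ) (hk : 1 ≤ k) (ω : ℤ → 𝕏) :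
    (2 : ℝ) ^ (-Kcode k n ω) ≤
      ((k : ℝ) ^ 2)⁻¹ * typeWt (Fin k → 𝕏) (n / k) (cntOf (blks k (n / k) ω)) := by
  have hX : (0 : ℝ) < Fintype.card 𝕏 := by exact_mod_cast Fintype.card_pos
  have hX1 : (1 : ℝ) ≤ Fintype.card 𝕏 := by exact_mod_cast Fintype.card_pos
  have hk0 : (0 : ℝ) < k := by exact_mod_cast hk
  have hk1 : (1 : ℝ) ≤ k := by exact_mod_cast hk
  set m := n / k with hm
  set c := cntOf (blks k m ω) with hc
  have hlX : 0 ≤ Real.logb 2 (Fintype.card 𝕏) := Real.logb_nonneg (by norm_num) hX1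
  have hmn : (m : ℝ) ≤ (n : ℝ) / k := Nat.cast_div_le
  have hplug : ∑ w, (c w : ℝ) * Real.logb 2 ((c w : ℝ) / m) = -(m * plugIn k n ω) := by
    unfold plugIn Hent
    rw [mul_neg, neg_neg, Finset.mul_sum]
    refine Finset.sum_congr rfl fun w _ => ?_
    rw [empDist_eq, ← hm, ← hc]
    rcases Nat.eq_zero_or_pos m with h0 | h0
    · have : c w = 0 := by have : c w ≤ m := cntOf_le (blks k m ω) w; omega
      simp [this]
    · have : (m : ℝ) ≠ 0 := by exact_mod_cast h0.ne'
      field_simp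
  have hprod : ∏ w, ((c w : ℝ) / m) ^ (c w) = (2 : ℝ) ^ (-(m * plugIn k n ω)) := by
    rw [← hplug, Real.rpow_sum_of_pos (by norm_num)]
    refine Finset.prod_congr rfl fun w _ => ?_
    rcases Nat.eq_zero_or_pos (c w) with h0 | h0
    · simp [h0]
    · have hm0 : 0 < m := lt_of_lt_of_le h0 (cntOf_le _ w)
      have : (0 : ℝ) < (c w : ℝ) / m := by positivity
      rw [mul_comm, Real.rpow_mul (by norm_num), Real.rpow_logb (by norm_num) (by norm_num) this,
        Real.rpow_natCast]
  have hprod2 : ∏ w, ((1 / 4 : ℝ) ^ (c w) * (if c w = 0 then 1 else (Fintype.card (Fin k → 𝕏) : ℝ)⁻¹))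
      = (2 : ℝ) ^ (-(2 * m : ℝ)) * (2 : ℝ) ^ (-(k * Real.logb 2 (Fintype.card 𝕏) * Dcount k n ω)) := by
    rw [Finset.prod_mul_distrib, Finset.prod_pow_eq_pow_sum, sum_cntOf, Finset.prod_ite,
      Finset.prod_const_one, one_mul, Finset.prod_const, Dcount_eq]
    congr 1
    · rw [Real.rpow_neg (by norm_num), Real.rpow_mul (by norm_num), Real.rpow_natCast]
      rw [one_div, inv_pow]; norm_num
    · rw [Real.rpow_neg (by norm_num), Real.rpow_mul (by norm_num), Real.rpow_natCast, inv_pow]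
      congr 2
      rw [mul_comm, Real.rpow_mul (by norm_num), Real.rpow_logb (by norm_num) (by norm_num) hX]
      simp
  have hk2 : ((k : ℝ) ^ 2)⁻¹ = (2 : ℝ) ^ (-(2 * Real.logb 2 k)) := by
    rw [Real.rpow_neg (by norm_num), mul_comm, Real.rpow_mul (by norm_num),
      Real.rpow_logb (by norm_num) (by norm_num) hk0]
    norm_cast
  unfold typeWt
  rw [hprod, hprod2, hk2, ← Real.rpow_add (by norm_num), ← Real.rpow_add (by norm_num),
    ← Real.rpow_add (by norm_num)]
  apply Real.rpow_le_rpow_of_exponent_le (by norm_num)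
  unfold Kcode
  have h1 : (m : ℝ) * (plugIn k n ω + 2) ≤ (n : ℝ) / k * (plugIn k n ω + 2) :=
    mul_le_mul_of_nonneg_right hmn (by linarith [plugIn_nonneg k n ω])
  have h2 : 0 ≤ k * Real.logb 2 (Fintype.card 𝕏) * Dcount k n ω := by positivity
  have h3 : 0 ≤ k * Real.logb 2 (Fintype.card 𝕏) := by positivity
  linarith

lemma blks_imp (k m : ℕ) (ω ω' : ℤ → 𝕏) (h : blks k m ω' = blks k m ω) :
    blk 0 (m * k) ω' = blk 0 (m * k) ω := by
  ext j
  have hk : 0 < k := by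
    rcases Nat.eq_zero_or_pos k with rfl | h
    · exact absurd j.2 (by simp)
    · exact h
  have h1 : (j : ℕ) / k < m := Nat.div_lt_of_lt_mul (lt_of_lt_of_eq j.2 (mul_comm m k))
  have h2 := congrFun (congrFun h ⟨j / k, h1⟩) ⟨j % k, Nat.mod_lt _ hk⟩
  have e : (((j : ℕ) / k * k : ℕ) : ℤ) + 1 + ((j % k : ℕ) : ℤ) = ((0 : ℕ) : ℤ) + 1 + (j : ℤ) := by
    have := Nat.div_add_mod' (j : ℕ) k
    have h3 : (((j : ℕ) / k * k : ℕ) : ℤ) + ((j % k : ℕ) : ℤ) = (j : ℤ) := by exact_mod_cast this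
    push_cast at h3 ⊢
    linarith
  simp only [blks, blk] at h2 ⊢
  rw [e] at h2
  exact h2

lemma measurable_blks (k m : ℕ) : Measurable (blks k m : (ℤ → 𝕏) → _) := by
  unfold blks
  exact measurable_pi_lambda _ fun i => measurable_blk _ _

lemma measure_small (μ : Measure (ℤ → 𝕏)) [IsProbabilityMeasure μ] (k n : ℕ) (hk : 1 ≤ k) :
    μ {ω | pblock μ (n / k * k) (blk 0 (n / k * k) ω) < (2 : ℝ) ^ (-Kcode k n ω)}
      ≤ ENNReal.ofReal (3 * ((k : ℝ) ^ 2)⁻¹) := by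
  set m := n / k with hm
  let F : (Fin m → (Fin k → 𝕏)) → ℝ := fun b => ((k : ℝ) ^ 2)⁻¹ * typeWt (Fin k → 𝕏) m (cntOf b)
  have hF : ∀ b, 0 ≤ F b := fun b => mul_nonneg (by positivity) (typeWt_nonneg _ _ _)
  let S : (Fin m → (Fin k → 𝕏)) → Set (ℤ → 𝕏) := fun b =>
    {ω | blks k m ω = b ∧ μ {ω' | blks k m ω' = b} ≤ ENNReal.ofReal (F b)}
  have hsub : {ω | pblock μ (m * k) (blk 0 (m * k) ω) < (2 : ℝ) ^ (-Kcode k n ω)} ⊆ ⋃ b, S b := by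
    intro ω hω
    simp only [Set.mem_ofPred_eq] at hω
    refine Set.mem_iUnion.2 ⟨blks k m ω, rfl, ?_⟩
    have h1 : μ {ω' | blks k m ω' = blks k m ω} ≤
        μ {ω' | blk 0 (m * k) ω' = blk 0 (m * k) ω} :=
      measure_mono fun ω' hω' => blks_imp k m ω ω' hω'
    refine h1.trans ?_
    rw [ENNReal.le_ofReal_iff_toReal_le (measure_ne_top _ _) (hF _)]
    exact hω.le.trans (two_rpow_neg_Kcode_le k n hk ω)
  refine (measure_mono hsub).trans ((measure_iUnion_le _).trans ?_)
  rw [tsum_fintype]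
  have h2 : ∀ b, μ (S b) ≤ ENNReal.ofReal (F b) := by
    intro b
    by_cases hb : μ {ω' | blks k m ω' = b} ≤ ENNReal.ofReal (F b)
    · exact (measure_mono fun ω hω => hω.1).trans hb
    · have : S b = ∅ := by
        ext ω
        simp only [S, Set.mem_ofPred_eq, hb, and_false, Set.mem_empty_iff_false]
      rw [this]; simp
  refine (Finset.sum_le_sum fun b _ => h2 b).trans ?_
  rw [← ENNReal.ofReal_sum_of_nonneg fun b _ => hF b]
  apply ENNReal.ofReal_le_ofReal
  simp only [F]
  rw [← Finset.mul_sum, mul_comm]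
  gcongr
  exact kraft_blocks m

lemma barron (μ : Measure (ℤ → 𝕏)) [IsProbabilityMeasure μ] (n : ℕ → ℕ) :
    ∀ᵐ ω ∂μ, ∀ᶠ k in atTop,
      (2 : ℝ) ^ (-Kcode k (n k) ω) ≤ pblock μ (n k / k * k) (blk 0 (n k / k * k) ω) := by
  have hsum : Summable (fun k : ℕ => 3 * ((k : ℝ) ^ 2)⁻¹) :=
    (Real.summable_nat_pow_inv.2 (by norm_num)).mul_left 3
  have hle : ∀ k : ℕ, μ {ω | 1 ≤ k ∧ pblock μ (n k / k * k) (blk 0 (n k / k * k) ω) <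
      (2 : ℝ) ^ (-Kcode k (n k) ω)} ≤ ENNReal.ofReal (3 * ((k : ℝ) ^ 2)⁻¹) := by
    intro k
    by_cases hk : 1 ≤ k
    · exact (measure_mono fun ω hω => hω.2).trans (measure_small μ k (n k) hk)
    · simp [hk]
  have hfin : ∑' k : ℕ, μ {ω | 1 ≤ k ∧ pblock μ (n k / k * k) (blk 0 (n k / k * k) ω) <
      (2 : ℝ) ^ (-Kcode k (n k) ω)} ≠ ⊤ :=
    ne_top_of_le_ne_top hsum.tsum_ofReal_ne_top (ENNReal.tsum_le_tsum hle)
  filter_upwards [ae_eventually_notMem hfin] with ω hω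
  filter_upwards [hω, Filter.eventually_ge_atTop 1] with k hk hk1
  by_contra! hcon
  exact hk ⟨hk1, hcon⟩
/-- For a stationary ergodic process with entropy rate `h`, any `ε > 0` and
sample sizes `n(k) ≥ 2^{k(h+ε)}`, almost surely
`liminf_{k→∞} K(k, X_1^{n(k)})/n(k) ≥ h`. -/
theorem Kcode_rate_liminf_ge_ae
    {μ : Measure (ℤ → 𝕏)} [IsProbabilityMeasure μ]
    (herg : Ergodic shift μ) (h : ℝ)
    (hrate : Tendsto (fun k => Hblock μ k / k) atTop (nhds h))
    (ε : ℝ) (hε : 0 < ε) (n : ℕ → ℕ)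
    (hn : ∀ k : ℕ, (2 : ℝ) ^ ((k : ℝ) * (h + ε)) ≤ (n k : ℝ)) :
    ∀ᵐ ω ∂μ, h ≤ Filter.liminf (fun k => Kcode k (n k) ω / (n k)) atTop := by
  have hX1 : (1 : ℝ) ≤ Fintype.card 𝕏 := by exact_mod_cast Fintype.card_pos
  have hlX : 0 ≤ Real.logb 2 (Fintype.card 𝕏) := Real.logb_nonneg (by norm_num) hX1
  have hh : 0 ≤ h := by
    refine ge_of_tendsto' hrate fun k => div_nonneg ?_ (by positivity)
    unfold Hblock Hent
    rw [neg_nonneg]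
    exact Finset.sum_nonpos fun w _ => mul_nonpos_of_nonneg_of_nonpos (pblock_nonneg μ k w)
      (Real.logb_nonpos (by norm_num) (pblock_nonneg μ k w) (pblock_le_one μ k w))
  have hn0 : ∀ k, (0 : ℝ) < n k := fun k => lt_of_lt_of_le (by positivity) (hn k)
  have hkn : Tendsto (fun k : ℕ => (k : ℝ) / n k) atTop (nhds 0) := by
    have hr : (1 : ℝ) < (2 : ℝ) ^ (h + ε) := Real.one_lt_rpow (by norm_num) (by linarith)
    have h1 := tendsto_pow_const_div_const_pow_of_one_lt 1 hr
    refine squeeze_zero (fun k => by positivity) (fun k => ?_) h1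
    rw [pow_one, ← Real.rpow_natCast, ← Real.rpow_mul (by norm_num), mul_comm (h + ε)]
    have := hn k
    gcongr
  have hkle : ∀ᶠ k : ℕ in atTop, k ≤ n k := by
    filter_upwards [hkn.eventually (gt_mem_nhds one_pos)] with k hk
    rw [div_lt_one (hn0 k)] at hk
    exact_mod_cast hk.le
  have hNn : Tendsto (fun k : ℕ => ((n k / k * k : ℕ) : ℝ) / n k) atTop (nhds 1) := by
    have hl : Tendsto (fun k : ℕ => 1 - (k : ℝ) / n k) atTop (nhds 1) := by
      simpa using (tendsto_const_nhds (x := (1 : ℝ))).sub hkn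
    refine tendsto_of_tendsto_of_tendsto_of_le_of_le' hl tendsto_const_nhds ?_ ?_
    · filter_upwards [Filter.eventually_ge_atTop 1] with k hk
      rw [one_sub_div (hn0 k).ne']
      have h1 := Nat.div_add_mod' (n k) k
      have h2 := Nat.mod_lt (n k) hk
      have h3 : n k ≤ n k / k * k + k := by omega
      have h4 : (n k : ℝ) ≤ ((n k / k * k : ℕ) : ℝ) + k := by exact_mod_cast h3
      have := (hn0 k).le
      gcongr
      linarith
    · refine Filter.Eventually.of_forall fun k => ?_
      rw [div_le_one (hn0 k)]
      exact_mod_cast Nat.div_mul_le_self _ _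
  have hNtop : Tendsto (fun k : ℕ => n k / k * k) atTop atTop := by
    refine tendsto_atTop_mono' _ ?_ tendsto_id
    filter_upwards [hkle, Filter.eventually_ge_atTop 1] with k hk hk1
    have : 1 ≤ n k / k := (Nat.one_le_div_iff hk1).2 hk
    simpa using Nat.mul_le_mul_right k this
  have hbdd : ∀ ω : ℤ → 𝕏, IsCoboundedUnder (· ≥ ·) atTop (fun k => Kcode k (n k) ω / (n k)) := by
    intro ω
    refine IsBoundedUnder.isCoboundedUnder_ge (isBoundedUnder_of_eventually_le
      (a := 4 + 7 * Real.logb 2 (Fintype.card 𝕏)) ?_)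
    filter_upwards [hkle, Filter.eventually_ge_atTop 1] with k hk hk1
    have hk0 : (0 : ℝ) < k := by exact_mod_cast hk1
    have hk1' : (1 : ℝ) ≤ k := by exact_mod_cast hk1
    have hkR : (k : ℝ) ≤ n k := by exact_mod_cast hk
    have hm : 1 ≤ n k / k := (Nat.one_le_div_iff hk1).2 hk
    rw [div_le_iff₀ (hn0 k)]
    have a1 : Real.logb 2 k ≤ k := by
      rw [Real.logb_le_iff_le_rpow (by norm_num) hk0, Real.rpow_natCast]
      exact_mod_cast Nat.lt_two_pow_self.le
    have a2 : (n k : ℝ) / k * (plugIn k (n k) ω + 2) ≤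
        n k * (Real.logb 2 (Fintype.card 𝕏) + 2) := by
      have b1 : plugIn k (n k) ω + 2 ≤ k * (Real.logb 2 (Fintype.card 𝕏) + 2) := by
        have := plugIn_le k (n k) ω hm
        linarith
      calc _ ≤ (n k : ℝ) / k * (k * (Real.logb 2 (Fintype.card 𝕏) + 2)) := by gcongr
        _ = _ := by field_simp
    have a3 : (k : ℝ) * (Dcount k (n k) ω + 1) ≤ 2 * n k := by
      have b1 : Dcount k (n k) ω * k ≤ n k :=
        (Nat.mul_le_mul_right k (Dcount_le k (n k) ω)).trans (Nat.div_mul_le_self _ _)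
      have b2 : (Dcount k (n k) ω : ℝ) * k ≤ n k := by exact_mod_cast b1
      linarith
    have a4 := mul_le_mul_of_nonneg_left a3 hlX
    unfold Kcode
    linarith
  have hmain : ∀ c : ℝ, c < h → ∀ᵐ ω ∂μ, c ≤ Filter.liminf (fun k => Kcode k (n k) ω / (n k)) atTop := by
    intro c hc
    obtain ⟨c', hcc, hch⟩ := exists_between hc
    filter_upwards [smb_lower μ herg h hrate c' hch, barron μ n] with ω h1 h2
    refine le_liminf_of_le (hbdd ω) ?_
    have hlim : Tendsto (fun k : ℕ => c' * (((n k / k * k : ℕ) : ℝ) / n k)) atTop (nhds (c' * 1)) :=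
      hNn.const_mul c'
    rw [mul_one] at hlim
    filter_upwards [hNtop.eventually h1, h2, hlim.eventually (lt_mem_nhds hcc)] with k k1 k2 k3
    have k4 := k2.trans_lt k1
    rw [Real.rpow_lt_rpow_left_iff (by norm_num)] at k4
    rw [← mul_div_assoc] at k3
    refine k3.le.trans ?_
    have := (hn0 k).le
    gcongr
    linarith
  have hall : ∀ᵐ ω ∂μ, ∀ j : ℕ, h - 1 / ((j : ℝ) + 1) ≤
      Filter.liminf (fun k => Kcode k (n k) ω / (n k)) atTop := by
    rw [ae_all_iff]
    intro j
    apply hmain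
    have : (0 : ℝ) < 1 / ((j : ℝ) + 1) := by positivity
    linarith
  filter_upwards [hall] with ω hω
  have hl : Tendsto (fun j : ℕ => h - 1 / ((j : ℝ) + 1)) atTop (nhds (h - 0)) :=
    tendsto_const_nhds.sub tendsto_one_div_add_atTop_nhds_zero_nat
  rw [sub_zero] at hl
  exact le_of_tendsto' hl hω
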